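/- Let p₁₀, p₀₁ and p₄₀, p₃₁, p₂₂, p₁₃, p₀₄ be real numbers with p₁₀² + p₀₁² ≠ 0, and set P₁(θ) = p₁₀ cos θ + p₀₁ sin θ and P₄(θ) = Σ_{i+j=4} p_{ij} cosⁱθ sinʲθ. Then the equation dr/dθ = r(P₁(θ) r + P₄(θ) r⁴) has a center at r = 0 if and only if 3(p₄₀ + p₀₄) + p₂₂ = 0, (p₁₀² − p₀₁²)(p₀₄ − p₄₀) = p₁₀p₀₁(p₃₁ + p₁₃), and p₄₀p₀₁⁴ − p₃₁p₀₁³p₁₀ + p₂₂p₀₁²p₁₀² − p₁₃p₀₁p₁₀³ + p₀₄p₁₀⁴ = 0. -/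

import Mathlib

open Real

/-- A 2π-periodic scalar ODE `dr/dθ = F θ r` has a center at `r = 0` if every solution
with `|r 0|` sufficiently small is defined on `[0, 2π]` and satisfies `r (2π) = r 0`. -/
def HasCenterAtZero (F : ℝ → ℝ → ℝ) : Prop :=
  ∃ ε > (0 : ℝ), ∀ r : ℝ → ℝ, |r 0| < ε →
    (∀ θ ∈ Set.Icc (0 : ℝ) (2 * Real.pi), HasDerivAt r (F θ (r θ)) θ) →
    r (2 * Real.pi) = r 0

open Set in
/-- Picard-Lindelof existence together with the location of the solution. -/
theorem qc_exists_sol (f : ℝ → ℝ → ℝ) (t1 t2 t0 x0 a L K : ℝ) (ht0 : t0 ∈ Icc t1 t2)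
    (ha : 0 ≤ a) (hL : 0 ≤ L) (hLa : L * (t2 - t1) ≤ a)
    (f' : ℝ → ℝ → ℝ)
    (hf' : ∀ t ∈ Icc t1 t2, ∀ x, |x - x0| ≤ a → HasDerivAt (f t) (f' t x) x)
    (hK : ∀ t ∈ Icc t1 t2, ∀ x, |x - x0| ≤ a → |f' t x| ≤ K)
    (hc : ∀ x, |x - x0| ≤ a → ContinuousOn (fun t => f t x) (Icc t1 t2))
    (hb : ∀ t ∈ Icc t1 t2, ∀ x, |x - x0| ≤ a → |f t x| ≤ L) :
    ∃ α : ℝ → ℝ, α t0 = x0 ∧ (∀ t, |α t - x0| ≤ a) ∧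
      ∀ t ∈ Ioo t1 t2, HasDerivAt α (f t (α t)) t := by
  have hK0 : 0 ≤ K := (abs_nonneg _).trans (hK t0 ht0 x0 (by simpa using ha))
  lift a to NNReal using ha
  lift L to NNReal using hL
  lift K to NNReal using hK0
  have hpl : IsPicardLindelof f (⟨t0, ht0⟩ : Icc t1 t2) x0 a 0 L K := by
    refine ⟨?_, ?_, ?_, ?_⟩
    · intro t ht
      refine (convex_closedBall _ _).lipschitzOnWith_of_nnnorm_hasDerivWithin_le
        (f' := f' t) ?_ ?_
      · intro x hx
        exact (hf' t ht x hx).hasDerivWithinAt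
      · intro x hx
        exact hK t ht x hx
    · intro x hx
      exact hc x hx
    · intro t ht x hx
      exact hb t ht x hx
    · have h1 : max (t2 - t0) (t0 - t1) ≤ t2 - t1 :=
        max_le (by linarith [ht0.1]) (by linarith [ht0.2])
      have h2 : L * max (t2 - t0) (t0 - t1) ≤ L * (t2 - t1) := by gcongr
      simpa using h2.trans hLa
  have hx : x0 ∈ Metric.closedBall x0 ((0 : NNReal) : ℝ) := by simp
  obtain ⟨α, hα⟩ := ODE.FunSpace.exists_isFixedPt_next hpl hx
  refine ⟨α.compProj, ?_, ?_, ?_⟩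
  · have := ODE.FunSpace.compProj_val (α := α) (t := ⟨t0, ht0⟩)
    rw [this, ← hα, ODE.FunSpace.next_apply₀]
  · intro t
    exact α.compProj_mem_closedBall hpl.mul_max_le
  · intro t ht
    have ht' := Ioo_subset_Icc_self ht
    refine HasDerivWithinAt.hasDerivAt (s := Icc t1 t2) ?_ (Icc_mem_nhds ht.1 ht.2)
    apply ODE.hasDerivWithinAt_picard_Icc ht0 hpl.continuousOn_uncurry
      α.continuous_compProj.continuousOn (fun _ ht' ↦ α.compProj_mem_closedBall hpl.mul_max_le)
      x0 ht' |>.congr_of_mem _ ht'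
    intro t' ht''
    nth_rw 1 [← hα]
    rw [ODE.FunSpace.compProj_of_mem ht'', ODE.FunSpace.next_apply]

theorem qc_zero_of_le (f : ℝ → ℝ) (hf : Continuous f) (C x0 : ℝ) (hx0 : 0 < x0)
    (h : ∀ x, 0 < x → x < x0 → |f x| ≤ C * x) : f 0 = 0 := by
  have h1 : Filter.Tendsto (fun x => |f x|) (nhdsWithin 0 (Set.Ioi 0)) (nhds |f 0|) :=
    (hf.abs.tendsto 0).mono_left nhdsWithin_le_nhds
  have h2 : Filter.Tendsto (fun x : ℝ => C * x) (nhdsWithin 0 (Set.Ioi 0)) (nhds (C * 0)) :=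
    ((continuous_const.mul continuous_id).tendsto 0).mono_left nhdsWithin_le_nhds
  have h3 : |f 0| ≤ C * 0 := by
    refine le_of_tendsto_of_tendsto h1 h2 ?_
    filter_upwards [Ioo_mem_nhdsGT hx0] with x hx
    exact h x hx.1 hx.2
  have := abs_nonneg (f 0)
  exact abs_eq_zero.1 (by linarith)

theorem qc_poly_zero (a b c d e C x0 : ℝ) (hx0 : 0 < x0)
    (h : ∀ x, 0 < x → x < x0 → |a + b * x + c * x ^ 2 + d * x ^ 3 + e * x ^ 4| ≤ C * x ^ 5) :
    a = 0 ∧ c = 0 ∧ e = 0 := by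
  have key : ∀ (f : ℝ → ℝ) (n : ℕ), Continuous f →
      (∀ x, 0 < x → x < x0 → |x ^ n * f x| ≤ C * x ^ 5) → n < 5 → f 0 = 0 := by
    intro f n hf hh hn
    have hC : 0 ≤ C := by
      have h1 := (abs_nonneg _).trans (h (x0 / 2) (by linarith) (by linarith))
      have h2 : 0 < (x0 / 2) ^ 5 := by positivity
      by_contra hC
      push Not at hC
      nlinarith
    refine qc_zero_of_le f hf C (min x0 1) (by positivity) ?_
    intro x hx hx1
    have h2 := hh x hx (hx1.trans_le (min_le_left _ _))
    have hx2 : x < 1 := hx1.trans_le (min_le_right _ _)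
    rw [abs_mul, abs_of_pos (pow_pos hx n)] at h2
    have h3 : x ^ 5 ≤ x ^ n * x := by
      rw [← pow_succ]
      exact pow_le_pow_of_le_one hx.le hx2.le (by omega)
    have h4 : x ^ n * |f x| ≤ x ^ n * (C * x) := by
      calc _ ≤ C * x ^ 5 := h2
        _ ≤ C * (x ^ n * x) := by gcongr
        _ = _ := by ring
    exact le_of_mul_le_mul_left h4 (pow_pos hx n)
  have ha : a = 0 := by
    have := key (fun x => a + b * x + c * x ^ 2 + d * x ^ 3 + e * x ^ 4) 0 (by fun_prop)
      (by intro x h1 h2; simpa using h x h1 h2) (by norm_num)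
    simpa using this
  subst ha
  have hb : b = 0 := by
    have := key (fun x => b + c * x ^ 1 + d * x ^ 2 + e * x ^ 3) 1 (by fun_prop)
      (by
        intro x h1 h2
        convert h x h1 h2 using 2
        ring) (by norm_num)
    simpa using this
  subst hb
  have hc : c = 0 := by
    have := key (fun x => c + d * x ^ 1 + e * x ^ 2) 2 (by fun_prop)
      (by
        intro x h1 h2
        convert h x h1 h2 using 2
        ring) (by norm_num)
    simpa using this
  subst hc
  have hd : d = 0 := by
    have := key (fun x => d + e * x ^ 1) 3 (by fun_prop)
      (by
        intro x h1 h2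
        convert h x h1 h2 using 2
        ring) (by norm_num)
    simpa using this
  subst hd
  have he : e = 0 := by
    have := key (fun x => e) 4 (by fun_prop)
      (by
        intro x h1 h2
        convert h x h1 h2 using 2
        ring) (by norm_num)
    simpa using this
  exact ⟨rfl, rfl, he⟩

/-- Trigonometric moments over a full period. -/
noncomputable def qcMoment (i j : ℕ) : ℝ :=
  ∫ t in (0 : ℝ)..(2 * Real.pi), Real.cos t ^ i * Real.sin t ^ j

theorem qcMoment_split (i j : ℕ) :
    qcMoment (i + 2) j + qcMoment i (j + 2) = qcMoment i j := by
  unfold qcMoment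
  rw [← intervalIntegral.integral_add]
  · congr 1
    ext t
    linear_combination (Real.cos t ^ i * Real.sin t ^ j) * Real.sin_sq_add_cos_sq t
  · exact (by fun_prop : Continuous _).intervalIntegrable _ _
  · exact (by fun_prop : Continuous _).intervalIntegrable _ _

theorem qcMoment_parts (i j : ℕ) :
    (j + 1) * qcMoment (i + 2) j = (i + 1) * qcMoment i (j + 2) := by
  have h1 : ∀ t ∈ Set.uIcc (0 : ℝ) (2 * Real.pi),
      HasDerivAt (fun t => Real.cos t ^ (i + 1) * Real.sin t ^ (j + 1))
        ((j + 1) * (Real.cos t ^ (i + 2) * Real.sin t ^ j)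
          - (i + 1) * (Real.cos t ^ i * Real.sin t ^ (j + 2))) t := by
    intro t _
    refine (((Real.hasDerivAt_cos t).pow (i + 1)).mul
      ((Real.hasDerivAt_sin t).pow (j + 1))).congr_deriv ?_
    simp only [Pi.pow_apply, Nat.add_sub_cancel]
    push_cast
    ring
  have h2 := intervalIntegral.integral_eq_sub_of_hasDerivAt h1
    ((by fun_prop : Continuous _).intervalIntegrable _ _)
  rw [intervalIntegral.integral_sub, intervalIntegral.integral_const_mul,
    intervalIntegral.integral_const_mul] at h2
  · simp at h2
    unfold qcMoment
    linarith
  · exact (by fun_prop : Continuous _).intervalIntegrable _ _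
  · exact (by fun_prop : Continuous _).intervalIntegrable _ _

theorem qcMoment_left (i j : ℕ) :
    qcMoment (i + 2) j = (i + 1) / (i + j + 2) * qcMoment i j := by
  have h1 := qcMoment_split i j
  have h2 := qcMoment_parts i j
  have : (i + j + 2 : ℝ) ≠ 0 := by positivity
  field_simp
  linear_combination h2 + (i + 1) * h1

theorem qcMoment_right (i j : ℕ) :
    qcMoment i (j + 2) = (j + 1) / (i + j + 2) * qcMoment i j := by
  have h1 := qcMoment_split i j
  have h2 := qcMoment_parts i j
  have : (i + j + 2 : ℝ) ≠ 0 := by positivity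
  field_simp
  linear_combination -h2 + (j + 1) * h1

theorem qcMoment_zero : qcMoment 0 0 = 2 * Real.pi := by simp [qcMoment]

theorem qcMoment_one : qcMoment 1 1 = 0 := by
  have h1 : ∀ t ∈ Set.uIcc (0 : ℝ) (2 * Real.pi),
      HasDerivAt (fun t => Real.sin t ^ 2 / 2) (Real.cos t ^ 1 * Real.sin t ^ 1) t := by
    intro t _
    refine (((Real.hasDerivAt_sin t).pow 2).div_const 2).congr_deriv ?_
    push_cast
    ring
  have h2 := intervalIntegral.integral_eq_sub_of_hasDerivAt h1
    ((by fun_prop : Continuous _).intervalIntegrable _ _)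
  unfold qcMoment
  rw [h2]
  simp

theorem qc_integral_form (c : Fin 9 → ℝ) :
    ∫ t in (0 : ℝ)..(2 * Real.pi),
      (∑ j : Fin 9, c j * (Real.cos t ^ (8 - (j : ℕ)) * Real.sin t ^ (j : ℕ))) =
    (2 * Real.pi) / 128 * (35 * c 0 + 5 * c 2 + 3 * c 4 + 5 * c 6 + 35 * c 8) := by
  rw [intervalIntegral.integral_finsetSum]
  · simp only [intervalIntegral.integral_const_mul]
    change ∑ j : Fin 9, c j * qcMoment (8 - (j : ℕ)) (j : ℕ) = _
    have z := qcMoment_zero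
    have o := qcMoment_one
    have a2 := qcMoment_left 0 0
    have a4 := qcMoment_left 2 0
    have a6 := qcMoment_left 4 0
    have a8 := qcMoment_left 6 0
    have b2 := qcMoment_right 6 0
    have b4a := qcMoment_right 4 0
    have b4 := qcMoment_right 4 2
    have b6a := qcMoment_right 2 0
    have b6b := qcMoment_right 2 2
    have b6 := qcMoment_right 2 4
    have b8a := qcMoment_right 0 0
    have b8b := qcMoment_right 0 2
    have b8c := qcMoment_right 0 4
    have b8 := qcMoment_right 0 6
    have c3 := qcMoment_left 1 1
    have c5 := qcMoment_left 3 1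
    have c7 := qcMoment_left 5 1
    have d3a := qcMoment_right 3 1
    have d3 := qcMoment_right 5 1
    have d5 := qcMoment_right 3 3
    have e3 := qcMoment_right 1 1
    have e5 := qcMoment_right 1 3
    have e7 := qcMoment_right 1 5
    norm_num [z, o] at a2 a4 a6 a8 b2 b4a b4 b6a b6b b6 b8a b8b b8c b8 c3 c5 c7 d3a d3 d5 e3 e5 e7
    simp only [Fin.sum_univ_succ]
    simp
    rw [a8, a6, a4, a2, c7, c5, c3, b2, a6, a4, a2, d3, c5, c3, b4, b4a, a4, a2, d5, d3a, c3,
      b6, b6b, b6a, a2, e7, e5, e3, b8, b8c, b8b, b8a]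
    ring
  · intro j _
    exact (by fun_prop : Continuous _).intervalIntegrable _ _

theorem qc_integral_prod (f : ℝ → ℝ) (a0 a1 a2 a3 a4 q0 q1 q2 q3 q4 : ℝ)
    (hf : ∀ t, f t = (a0 * Real.cos t ^ 4 + a1 * Real.cos t ^ 3 * Real.sin t
      + a2 * Real.cos t ^ 2 * Real.sin t ^ 2 + a3 * Real.cos t * Real.sin t ^ 3
      + a4 * Real.sin t ^ 4) * (q0 * Real.cos t ^ 4 + q1 * Real.cos t ^ 3 * Real.sin t
      + q2 * Real.cos t ^ 2 * Real.sin t ^ 2 + q3 * Real.cos t * Real.sin t ^ 3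
      + q4 * Real.sin t ^ 4)) (hi : ∫ t in (0 : ℝ)..(2 * Real.pi), f t = 0) :
    35 * (a0 * q0) + 5 * (a0 * q2 + a1 * q1 + a2 * q0)
      + 3 * (a0 * q4 + a1 * q3 + a2 * q2 + a3 * q1 + a4 * q0)
      + 5 * (a2 * q4 + a3 * q3 + a4 * q2) + 35 * (a4 * q4) = 0 := by
  have h := qc_integral_form ![a0 * q0, a0 * q1 + a1 * q0, a0 * q2 + a1 * q1 + a2 * q0,
    a0 * q3 + a1 * q2 + a2 * q1 + a3 * q0, a0 * q4 + a1 * q3 + a2 * q2 + a3 * q1 + a4 * q0,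
    a1 * q4 + a2 * q3 + a3 * q2 + a4 * q1, a2 * q4 + a3 * q3 + a4 * q2,
    a3 * q4 + a4 * q3, a4 * q4]
  rw [show f = _ from funext hf] at hi
  have hpi := Real.pi_pos
  have h2 : (2 * Real.pi) / 128 ≠ 0 := by positivity
  apply mul_left_cancel₀ h2
  rw [mul_zero, ← hi]
  refine Eq.trans (Eq.trans ?_ h.symm) ?_
  · rfl
  · congr 1
    ext t
    simp [Fin.sum_univ_succ]
    ring

/-- The derivative of the truncated first integral. -/
theorem qc_deriv_G (P4 Q u A0 A1 A2 A3 A4 : ℝ → ℝ) (t : ℝ)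
    (hA0 : HasDerivAt A0 (P4 t) t) (hA1 : HasDerivAt A1 (P4 t * Q t) t)
    (hA2 : HasDerivAt A2 (P4 t * Q t ^ 2) t) (hA3 : HasDerivAt A3 (P4 t * Q t ^ 3) t)
    (hA4 : HasDerivAt A4 (P4 t * Q t ^ 4) t)
    (hu0 : u t ≠ 0) (huQ : u t - Q t ≠ 0)
    (hu : HasDerivAt u (-P4 t / (u t - Q t) ^ 3) t) :
    HasDerivAt (fun s => u s ^ 4 / 4 + A0 s + 3 * (A1 s / u s) + 6 * (A2 s / u s ^ 2)
        + 10 * (A3 s / u s ^ 3) + 15 * (A4 s / u s ^ 4))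
      ((u t)⁻¹ ^ 5 * (P4 t * (3 * A1 t + 12 * A2 t * (u t)⁻¹ + 30 * A3 t * (u t)⁻¹ ^ 2
        + 60 * A4 t * (u t)⁻¹ ^ 3
        - Q t ^ 5 * (21 - 35 * (Q t * (u t)⁻¹) + 15 * (Q t * (u t)⁻¹) ^ 2))
        / (1 - Q t * (u t)⁻¹) ^ 3)) t := by
  have h := ((((((hu.pow 4).div_const 4).add hA0).add ((hA1.div hu hu0).const_mul 3)).add
    ((hA2.div (hu.pow 2) (pow_ne_zero 2 hu0)).const_mul 6)).add
    ((hA3.div (hu.pow 3) (pow_ne_zero 3 hu0)).const_mul 10)).add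
    ((hA4.div (hu.pow 4) (pow_ne_zero 4 hu0)).const_mul 15)
  refine h.congr_deriv ?_
  simp only [Pi.pow_apply]
  generalize P4 t = P
  generalize A1 t = a1
  generalize A2 t = a2
  generalize A3 t = a3
  generalize A4 t = a4
  have e : 1 - Q t * (u t)⁻¹ = (u t - Q t) * (u t)⁻¹ := by
    field_simp
  rw [e]
  obtain ⟨d, hd⟩ : ∃ d, d = u t - Q t := ⟨_, rfl⟩
  have hQ : Q t = u t - d := by rw [hd]; ring
  rw [← hd] at huQ ⊢
  rw [hQ]
  generalize u t = v at *
  push_cast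
  field_simp
  ring

open Set in
theorem qc_forward (P1 P4 Q : ℝ → ℝ) (hQ : ∀ t, HasDerivAt Q (P1 t) t) (hP4 : Continuous P4)
    (hper : Q (2 * Real.pi) = Q 0)
    (hcen : HasCenterAtZero (fun θ r => r * (P1 θ * r + P4 θ * r ^ 4))) :
    (∫ t in (0 : ℝ)..(2 * Real.pi), P4 t) = 0 ∧
    (∫ t in (0 : ℝ)..(2 * Real.pi), P4 t * Q t ^ 2) = 0 ∧
    (∫ t in (0 : ℝ)..(2 * Real.pi), P4 t * Q t ^ 4) = 0 := by
  have hQc : Continuous Q := continuous_iff_continuousAt.2 fun t => (hQ t).continuousAt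
  have hpi := Real.pi_pos
  have hpi4 := Real.pi_lt_d2
  obtain ⟨M, hM⟩ := (isCompact_Icc (a := (-1 : ℝ)) (b := 7)).exists_bound_of_continuousOn
    hP4.continuousOn
  obtain ⟨q, hq⟩ := (isCompact_Icc (a := (-1 : ℝ)) (b := 7)).exists_bound_of_continuousOn
    hQc.continuousOn
  simp only [Real.norm_eq_abs] at hM hq
  have hM0 : 0 ≤ M := (abs_nonneg _).trans (hM 0 (by norm_num))
  have hq0 : 0 ≤ q := (abs_nonneg _).trans (hq 0 (by norm_num))
  have hD : ∀ f : ℝ → ℝ, Continuous f → ∀ t,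
      HasDerivAt (fun s => ∫ x in (0 : ℝ)..s, f x) (f t) t := fun f hf t =>
    (hf.integral_hasStrictDerivAt 0 t).hasDerivAt
  obtain ⟨A0, hA0⟩ : ∃ A : ℝ → ℝ, A = fun s => ∫ x in (0 : ℝ)..s, P4 x := ⟨_, rfl⟩
  obtain ⟨A1, hA1⟩ : ∃ A : ℝ → ℝ, A = fun s => ∫ x in (0 : ℝ)..s, P4 x * Q x := ⟨_, rfl⟩
  obtain ⟨A2, hA2⟩ : ∃ A : ℝ → ℝ, A = fun s => ∫ x in (0 : ℝ)..s, P4 x * Q x ^ 2 := ⟨_, rfl⟩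
  obtain ⟨A3, hA3⟩ : ∃ A : ℝ → ℝ, A = fun s => ∫ x in (0 : ℝ)..s, P4 x * Q x ^ 3 := ⟨_, rfl⟩
  obtain ⟨A4, hA4⟩ : ∃ A : ℝ → ℝ, A = fun s => ∫ x in (0 : ℝ)..s, P4 x * Q x ^ 4 := ⟨_, rfl⟩
  have d0 : ∀ t, HasDerivAt A0 (P4 t) t := by
    intro t; rw [hA0]; exact hD _ hP4 t
  have d1 : ∀ t, HasDerivAt A1 (P4 t * Q t) t := by
    intro t; rw [hA1]; exact hD (fun x => P4 x * Q x) (by fun_prop) t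
  have d2 : ∀ t, HasDerivAt A2 (P4 t * Q t ^ 2) t := by
    intro t; rw [hA2]; exact hD (fun x => P4 x * Q x ^ 2) (by fun_prop) t
  have d3 : ∀ t, HasDerivAt A3 (P4 t * Q t ^ 3) t := by
    intro t; rw [hA3]; exact hD (fun x => P4 x * Q x ^ 3) (by fun_prop) t
  have d4 : ∀ t, HasDerivAt A4 (P4 t * Q t ^ 4) t := by
    intro t; rw [hA4]; exact hD (fun x => P4 x * Q x ^ 4) (by fun_prop) t
  have z0 : A0 0 = 0 := by simp [hA0]
  have z1 : A1 0 = 0 := by simp [hA1]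
  have z2 : A2 0 = 0 := by simp [hA2]
  have z3 : A3 0 = 0 := by simp [hA3]
  have z4 : A4 0 = 0 := by simp [hA4]
  have e0 : (∫ t in (0 : ℝ)..(2 * Real.pi), P4 t) = A0 (2 * Real.pi) := by rw [hA0]
  have e2 : (∫ t in (0 : ℝ)..(2 * Real.pi), P4 t * Q t ^ 2) = A2 (2 * Real.pi) := by rw [hA2]
  have e4 : (∫ t in (0 : ℝ)..(2 * Real.pi), P4 t * Q t ^ 4) = A4 (2 * Real.pi) := by rw [hA4]
  rw [e0, e2, e4]
  clear e0 e2 e4 hA0 hA1 hA2 hA3 hA4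
  have c1 : Continuous A1 := continuous_iff_continuousAt.2 fun t => (d1 t).continuousAt
  have c2 : Continuous A2 := continuous_iff_continuousAt.2 fun t => (d2 t).continuousAt
  have c3 : Continuous A3 := continuous_iff_continuousAt.2 fun t => (d3 t).continuousAt
  have c4 : Continuous A4 := continuous_iff_continuousAt.2 fun t => (d4 t).continuousAt
  -- uniform bound for the remainder
  have hsub : Icc (0 : ℝ) (2 * Real.pi) ⊆ Ioo (-1 : ℝ) 7 := fun t ht =>
    ⟨by linarith [ht.1], by linarith [ht.2]⟩
  have hQw : ∀ t ∈ Icc (0 : ℝ) (2 * Real.pi), ∀ w ∈ Icc (0 : ℝ) (1 / (2 * (q + 1))),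
      1 - Q t * w ≠ 0 := by
    intro t ht w hw
    have h1 := hq t (Ioo_subset_Icc_self (hsub ht))
    have h2 : w * (2 * (q + 1)) ≤ 1 := by
      have := hw.2
      rwa [le_div_iff₀ (by positivity)] at this
    have h3 : Q t * w ≤ q * w := mul_le_mul_of_nonneg_right ((le_abs_self _).trans h1) hw.1
    have h4 : 0 ≤ w := hw.1
    intro h5
    nlinarith
  obtain ⟨C, hC⟩ := ((isCompact_Icc (a := (0 : ℝ)) (b := 2 * Real.pi)).prod
    (isCompact_Icc (a := (0 : ℝ)) (b := 1 / (2 * (q + 1))))).exists_bound_of_continuousOn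
    (f := fun p : ℝ × ℝ => P4 p.1 * (3 * A1 p.1 + 12 * A2 p.1 * p.2 + 30 * A3 p.1 * p.2 ^ 2
        + 60 * A4 p.1 * p.2 ^ 3
        - Q p.1 ^ 5 * (21 - 35 * (Q p.1 * p.2) + 15 * (Q p.1 * p.2) ^ 2))
        / (1 - Q p.1 * p.2) ^ 3) (by
      refine ContinuousOn.div ?_ ?_ ?_
      · exact (by fun_prop : Continuous _).continuousOn
      · exact (by fun_prop : Continuous _).continuousOn
      · intro p hp
        exact pow_ne_zero 3 (hQw p.1 hp.1 p.2 hp.2))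
  simp only [Real.norm_eq_abs] at hC
  have hC0 : 0 ≤ C := (abs_nonneg _).trans (hC (0, 0) ⟨⟨le_rfl, by positivity⟩,
    ⟨le_rfl, by positivity⟩⟩)
  obtain ⟨ε, hε, hcen⟩ := hcen
  -- main estimate
  have main : ∀ x, 0 < x → x < 1 / (2 * (q + 1) + 10 * M + 2 + 1 / ε) →
      |A0 (2 * Real.pi) + 3 * A1 (2 * Real.pi) * x + 6 * A2 (2 * Real.pi) * x ^ 2
        + 10 * A3 (2 * Real.pi) * x ^ 3 + 15 * A4 (2 * Real.pi) * x ^ 4|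
        ≤ (32 * C * (2 * Real.pi)) * x ^ 5 := by
    intro x hx hx1
    obtain ⟨U, hU⟩ : ∃ U, U = 1 / x := ⟨_, rfl⟩
    have hUbig : 2 * (q + 1) + 10 * M + 2 + 1 / ε < U := by
      rw [hU, lt_one_div (by positivity) hx]
      exact hx1
    have hεi : 0 < 1 / ε := by positivity
    have hge : ∀ t ∈ Icc (-1 : ℝ) 7, ∀ y, |y - U| ≤ 1 → 10 * M + 1 ≤ y - Q t := by
      intro t ht y hy
      have h1 := (abs_le.1 hy).1
      have h2 := (abs_le.1 (hq t ht)).2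
      linarith
    have hpow : ∀ (n : ℕ), n ≠ 0 → ∀ t ∈ Icc (-1 : ℝ) 7, ∀ y, |y - U| ≤ 1 →
        |P4 t| / (y - Q t) ^ n ≤ 1 / 10 := by
      intro n hn t ht y hy
      have h1 := hge t ht y hy
      have h2 : 10 * M + 1 ≤ (y - Q t) ^ n :=
        h1.trans (le_self_pow₀ (by linarith) hn)
      rw [div_le_iff₀ (by linarith)]
      linarith [hM t ht]
    obtain ⟨u, hu0, hub, hud⟩ := qc_exists_sol (fun t y => -P4 t / (y - Q t) ^ 3) (-1) 7 0 U 1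
      (1 / 10) 3 (by norm_num) (by norm_num) (by norm_num) (by norm_num)
      (fun t y => 3 * P4 t / (y - Q t) ^ 4)
      (by
        intro t ht y hy
        have h1 := hge t ht y hy
        have h2 : y - Q t ≠ 0 := by linarith
        refine ((hasDerivAt_const y (-P4 t)).div (((hasDerivAt_id y).sub_const (Q t)).pow 3)
          (pow_ne_zero 3 h2)).congr_deriv ?_
        simp only [Pi.pow_apply, id]
        push_cast
        field_simp
        ring)
      (by
        intro t ht y hy
        have h1 := hge t ht y hy
        have h2 := hpow 4 (by norm_num) t ht y hy
        have h3 : (0 : ℝ) < (y - Q t) ^ 4 := pow_pos (by linarith) 4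
        rw [abs_div, abs_mul, abs_of_pos h3, mul_div_assoc]
        norm_num
        linarith)
      (by
        intro y hy
        refine ContinuousOn.div ?_ ?_ ?_
        · exact (by fun_prop : Continuous _).continuousOn
        · exact (by fun_prop : Continuous _).continuousOn
        · intro t ht
          have h1 := hge t ht y hy
          exact pow_ne_zero 3 (by linarith))
      (by
        intro t ht y hy
        have h1 := hge t ht y hy
        have h2 := hpow 3 (by norm_num) t ht y hy
        have h3 : (0 : ℝ) < (y - Q t) ^ 3 := pow_pos (by linarith) 3
        rw [abs_div, abs_neg, abs_of_pos h3]
        exact h2)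
    have huQ : ∀ t ∈ Icc (0 : ℝ) (2 * Real.pi), 0 < u t - Q t := by
      intro t ht
      have := hge t (Ioo_subset_Icc_self (hsub ht)) (u t) (hub t)
      linarith
    -- the return map of the original equation
    have hret := hcen (fun t => (u t - Q t)⁻¹) (by
      have h0 := hq 0 (by norm_num)
      have h1 := (abs_le.1 h0).2
      have h2 : 1 / ε < u 0 - Q 0 := by rw [hu0]; linarith
      have h3 : 0 < u 0 - Q 0 := hεi.trans h2
      rw [abs_of_pos (inv_pos.2 h3), ← one_div, one_div_lt h3 hε]
      exact h2) (by
      intro t ht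
      have h1 := (huQ t ht).ne'
      refine (((hud t (hsub ht)).sub (hQ t)).inv h1).congr_deriv ?_
      simp only [Pi.sub_apply]
      field_simp
      ring)
    have hu2 : u (2 * Real.pi) = U := by
      have := inv_injective hret
      rw [hper, hu0] at this
      linarith
    have hU0 : 0 < U := by linarith
    have huU : ∀ t, U / 2 ≤ u t := by
      intro t
      have := (abs_le.1 (hub t)).1
      linarith
    have hmv := norm_image_sub_le_of_norm_deriv_le_segment' (a := 0) (b := 2 * Real.pi)
      (C := 32 * C * x ^ 5)
      (f := fun s => u s ^ 4 / 4 + A0 s + 3 * (A1 s / u s) + 6 * (A2 s / u s ^ 2)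
        + 10 * (A3 s / u s ^ 3) + 15 * (A4 s / u s ^ 4))
      (fun t ht => (qc_deriv_G P4 Q u A0 A1 A2 A3 A4 t (d0 t) (d1 t) (d2 t) (d3 t) (d4 t)
        (by linarith [huU t]) (huQ t ht).ne' (hud t (hsub ht))).hasDerivWithinAt)
      (by
        intro t ht
        have h1 := huU t
        have h2 : 0 < u t := by linarith
        have h3 : (u t)⁻¹ ≤ 2 * x := by
          have : x = 1 / U := by rw [hU]; field_simp
          rw [this, ← one_div, div_le_iff₀ h2]
          field_simp
          linarith
        have h4 : (u t)⁻¹ ≤ 1 / (2 * (q + 1)) := by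
          rw [← one_div]
          apply one_div_le_one_div_of_le (by positivity)
          linarith [(abs_le.1 (hub t)).1]
        have h5 := hC (t, (u t)⁻¹) ⟨Ico_subset_Icc_self ht, ⟨(inv_pos.2 h2).le, h4⟩⟩
        simp only at h5
        rw [Real.norm_eq_abs, abs_mul, abs_of_pos (pow_pos (inv_pos.2 h2) 5)]
        calc _ ≤ (2 * x) ^ 5 * C := by
              have := inv_pos.2 h2
              gcongr
          _ = 32 * C * x ^ 5 := by ring)
      (2 * Real.pi) ⟨by positivity, le_rfl⟩
    rw [Real.norm_eq_abs] at hmv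
    simp only [hu2, hu0, z0, z1, z2, z3, z4] at hmv
    have hUx : U = x⁻¹ := by rw [hU, one_div]
    rw [hUx] at hmv
    convert hmv using 1
    · congr 1
      field_simp
      ring
    · ring
  have hfin := qc_poly_zero _ _ _ _ _ _ _ (by positivity) main
  obtain ⟨f0, f2, f4⟩ := hfin
  exact ⟨f0, by linarith, by linarith⟩

open Set in
theorem qc_backward (P1 P4 Q g : ℝ → ℝ) (hQ : ∀ t, HasDerivAt Q (P1 t) t) (hP1 : Continuous P1)
    (hg : Continuous g) (hper : Q (2 * Real.pi) = Q 0) (hP4 : ∀ t, P4 t = P1 t * g (Q t)) :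
    HasCenterAtZero (fun θ r => r * (P1 θ * r + P4 θ * r ^ 4)) := by
  have hQc : Continuous Q := continuous_iff_continuousAt.2 fun t => (hQ t).continuousAt
  have hpi := Real.pi_pos
  have hP4c : Continuous P4 := by
    have : P4 = fun t => P1 t * g (Q t) := funext hP4
    rw [this]
    fun_prop
  obtain ⟨q, hq⟩ := (isCompact_Icc (a := (0 : ℝ)) (b := 2 * Real.pi)).exists_bound_of_continuousOn
    hQc.continuousOn
  simp only [Real.norm_eq_abs] at hq
  have h00 : (0 : ℝ) ∈ Icc (0 : ℝ) (2 * Real.pi) := ⟨le_rfl, by positivity⟩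
  have hq0 : 0 ≤ q := (abs_nonneg _).trans (hq 0 h00)
  obtain ⟨T, hT⟩ : ∃ T, T = q + 1 := ⟨_, rfl⟩
  have hT0 : 0 < T := by linarith
  obtain ⟨G, hG⟩ := (isCompact_Icc (a := -T) (b := T)).exists_bound_of_continuousOn
    hg.continuousOn
  simp only [Real.norm_eq_abs] at hG
  have hG0 : 0 ≤ G := (abs_nonneg _).trans (hG 0 ⟨by linarith, by linarith⟩)
  have hQT : ∀ t ∈ Icc (0 : ℝ) (2 * Real.pi), Q t ∈ Ioo (-T) T := by
    intro t ht
    have := abs_le.1 (hq t ht)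
    exact ⟨by linarith [this.1], by linarith [this.2]⟩
  obtain ⟨ε, hε⟩ : ∃ ε, ε = 1 / (72 * (1 + G) * T + 1) := ⟨_, rfl⟩
  have hε0 : 0 < ε := by rw [hε]; positivity
  have hε1 : ε * (72 * (1 + G) * T + 1) = 1 := by rw [hε]; field_simp
  have hεle : ε ≤ 1 := by
    rw [hε, div_le_one (by positivity)]
    have : 0 ≤ 72 * (1 + G) * T := by positivity
    linarith
  refine ⟨ε, hε0, ?_⟩
  intro r hr0 hr
  have hyb : ∀ y, |y - r 0| ≤ ε → |y| ≤ 2 * ε := by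
    intro y hy
    have := abs_sub_abs_le_abs_sub y (r 0)
    linarith
  obtain ⟨y, hy0, -, hyd⟩ := qc_exists_sol (fun t x => x ^ 2 + g t * x ^ 5) (-T) T (Q 0) (r 0) ε
    (36 * (1 + G) * ε ^ 2) (4 + 80 * G) (Ioo_subset_Icc_self (hQT 0 h00)) hε0.le (by positivity)
    (by
      have : ε * (72 * (1 + G) * T) ≤ 1 := by linarith
      nlinarith)
    (fun t x => 2 * x + g t * (5 * x ^ 4))
    (by
      intro t ht x hx
      refine (((hasDerivAt_id x).pow 2).add
        (((hasDerivAt_id x).pow 5).const_mul (g t))).congr_deriv ?_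
      simp only [id]
      push_cast
      ring)
    (by
      intro t ht x hx
      have h1 : |x| ≤ 2 := (hyb x hx).trans (by linarith)
      have h2 := hG t ht
      calc |2 * x + g t * (5 * x ^ 4)| ≤ |2 * x| + |g t * (5 * x ^ 4)| := abs_add_le _ _
        _ = 2 * |x| + |g t| * (5 * |x| ^ 4) := by
          simp only [abs_mul, abs_pow]
          norm_num
        _ ≤ 2 * 2 + G * (5 * 2 ^ 4) := by gcongr
        _ = 4 + 80 * G := by ring)
    (by
      intro x hx
      exact (by fun_prop : Continuous _).continuousOn)
    (by
      intro t ht x hx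
      have h1 := hyb x hx
      have h2 := hG t ht
      have h3 : ε ^ 5 ≤ ε ^ 2 := pow_le_pow_of_le_one hε0.le hεle (by norm_num)
      calc |x ^ 2 + g t * x ^ 5| ≤ |x ^ 2| + |g t * x ^ 5| := abs_add_le _ _
        _ = |x| ^ 2 + |g t| * |x| ^ 5 := by
          simp only [abs_mul, abs_pow]
        _ ≤ (2 * ε) ^ 2 + G * (2 * ε) ^ 5 := by gcongr
        _ = 4 * ε ^ 2 + 32 * G * ε ^ 5 := by ring
        _ ≤ 4 * ε ^ 2 + 32 * G * ε ^ 2 := by gcongr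
        _ ≤ 36 * (1 + G) * ε ^ 2 := by nlinarith [mul_nonneg hG0 (sq_nonneg ε), sq_nonneg ε])
  -- comparison of the two solutions
  have hyQ : ∀ t ∈ Icc (0 : ℝ) (2 * Real.pi),
      HasDerivAt (fun s => y (Q s))
        (y (Q t) * (P1 t * y (Q t) + P4 t * y (Q t) ^ 4)) t := by
    intro t ht
    refine ((hyd (Q t) (hQT t ht)).comp t (hQ t)).congr_deriv ?_
    rw [hP4]
    ring
  have hrc : ContinuousOn r (Icc 0 (2 * Real.pi)) := fun t ht =>
    (hr t ht).continuousAt.continuousWithinAt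
  have hyc : ContinuousOn (fun s => y (Q s)) (Icc 0 (2 * Real.pi)) := fun t ht =>
    (hyQ t ht).continuousAt.continuousWithinAt
  obtain ⟨R1, hR1⟩ := isCompact_Icc.exists_bound_of_continuousOn hrc
  obtain ⟨R2, hR2⟩ := isCompact_Icc.exists_bound_of_continuousOn hyc
  obtain ⟨m1, hm1⟩ := (isCompact_Icc (a := (0 : ℝ))
    (b := 2 * Real.pi)).exists_bound_of_continuousOn hP1.continuousOn
  obtain ⟨m4, hm4⟩ := (isCompact_Icc (a := (0 : ℝ))
    (b := 2 * Real.pi)).exists_bound_of_continuousOn hP4c.continuousOn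
  simp only [Real.norm_eq_abs] at hR1 hR2 hm1 hm4
  obtain ⟨R, hR⟩ : ∃ R, R = max R1 R2 := ⟨_, rfl⟩
  have hR0 : 0 ≤ R := by
    rw [hR]
    exact ((abs_nonneg _).trans (hR1 0 h00)).trans (le_max_left _ _)
  have hm10 : 0 ≤ m1 := (abs_nonneg _).trans (hm1 0 h00)
  have hm40 : 0 ≤ m4 := (abs_nonneg _).trans (hm4 0 h00)
  have hK0 : 0 ≤ m1 * (2 * R) + m4 * (5 * R ^ 4) := by positivity
  obtain ⟨K, hK⟩ : ∃ K : NNReal, (K : ℝ) = m1 * (2 * R) + m4 * (5 * R ^ 4) := by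
    lift (m1 * (2 * R) + m4 * (5 * R ^ 4)) to NNReal using hK0 with K
    exact ⟨K, rfl⟩
  have huniq := ODE_solution_unique_of_mem_Icc_right
    (v := fun θ r => r * (P1 θ * r + P4 θ * r ^ 4)) (K := K) (a := 0) (b := 2 * Real.pi)
    (s := fun _ => Icc (-R) R) (f := r) (g := fun s => y (Q s))
    (by
      intro t ht
      refine (convex_Icc _ _).lipschitzOnWith_of_nnnorm_hasDerivWithin_le
        (f' := fun x => P1 t * (2 * x) + P4 t * (5 * x ^ 4)) ?_ ?_
      · intro x hx
        refine HasDerivAt.hasDerivWithinAt ?_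
        refine ((hasDerivAt_id x).mul (((hasDerivAt_id x).const_mul (P1 t)).add
          (((hasDerivAt_id x).pow 4).const_mul (P4 t)))).congr_deriv ?_
        simp only [id, Pi.add_apply, Pi.pow_apply]
        push_cast
        ring
      · intro x hx
        rw [← NNReal.coe_le_coe, coe_nnnorm, hK, Real.norm_eq_abs]
        have h1 : |x| ≤ R := abs_le.2 hx
        have h2 := hm1 t (Ico_subset_Icc_self ht)
        have h3 := hm4 t (Ico_subset_Icc_self ht)
        calc _ ≤ |P1 t * (2 * x)| + |P4 t * (5 * x ^ 4)| := abs_add_le _ _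
          _ = |P1 t| * (2 * |x|) + |P4 t| * (5 * |x| ^ 4) := by
            simp only [abs_mul, abs_pow]
            norm_num
          _ ≤ _ := by gcongr)
    hrc (fun t ht => (hr t (Ico_subset_Icc_self ht)).hasDerivWithinAt)
    (fun t ht => abs_le.1 ((hR1 t (Ico_subset_Icc_self ht)).trans (hR ▸ le_max_left _ _)))
    hyc (fun t ht => (hyQ t (Ico_subset_Icc_self ht)).hasDerivWithinAt)
    (fun t ht => abs_le.1 ((hR2 t (Ico_subset_Icc_self ht)).trans (hR ▸ le_max_right _ _)))
    hy0.symm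
  have h1 := huniq (⟨by positivity, le_rfl⟩ : 2 * Real.pi ∈ Icc (0 : ℝ) (2 * Real.pi))
  rw [h1]
  simp only
  rw [hper, hy0]


/-- Corollary 2.6: center conditions for `dr/dθ = r (P₁ r + P₄ r⁴)`. -/
theorem quintic_center_conditions
    (p10 p01 p40 p31 p22 p13 p04 : ℝ) (h : p10 ^ 2 + p01 ^ 2 ≠ 0)
    (P1 P4 : ℝ → ℝ)
    (hP1 : ∀ θ, P1 θ = p10 * Real.cos θ + p01 * Real.sin θ)
    (hP4 : ∀ θ, P4 θ = p40 * Real.cos θ ^ 4 + p31 * Real.cos θ ^ 3 * Real.sin θ +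
      p22 * Real.cos θ ^ 2 * Real.sin θ ^ 2 + p13 * Real.cos θ * Real.sin θ ^ 3 +
      p04 * Real.sin θ ^ 4) :
    HasCenterAtZero (fun θ r => r * (P1 θ * r + P4 θ * r ^ 4)) ↔
      (3 * (p40 + p04) + p22 = 0 ∧
       (p10 ^ 2 - p01 ^ 2) * (p04 - p40) = p10 * p01 * (p31 + p13) ∧
       p40 * p01 ^ 4 - p31 * p01 ^ 3 * p10 + p22 * p01 ^ 2 * p10 ^ 2 -
         p13 * p01 * p10 ^ 3 + p04 * p10 ^ 4 = 0) := by

  obtain ⟨N, hN⟩ : ∃ N, N = p10 ^ 2 + p01 ^ 2 := ⟨_, rfl⟩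
  rw [← hN] at h
  obtain ⟨Q, hQdef⟩ : ∃ Q : ℝ → ℝ, Q = fun t => p10 * Real.sin t - p01 * Real.cos t := ⟨_, rfl⟩
  have hQ : ∀ t, HasDerivAt Q (P1 t) t := by
    intro t
    rw [hQdef, hP1]
    refine (((Real.hasDerivAt_sin t).const_mul p10).sub
      ((Real.hasDerivAt_cos t).const_mul p01)).congr_deriv ?_
    ring
  have hper : Q (2 * Real.pi) = Q 0 := by simp [hQdef]
  have hP1c : Continuous P1 := by
    rw [show P1 = _ from funext hP1]
    fun_prop
  have hP4c : Continuous P4 := by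
    rw [show P4 = _ from funext hP4]
    fun_prop
  constructor
  · intro hcen
    obtain ⟨i0, i2, i4⟩ := qc_forward P1 P4 Q hQ hP4c hper hcen
    have hpi := Real.pi_pos
    have j0 := qc_integral_prod P4 p40 p31 p22 p13 p04 1 0 2 0 1 (by
      intro t
      have hs := Real.sin_sq_add_cos_sq t
      have h1 : P4 t = P4 t * (Real.sin t ^ 2 + Real.cos t ^ 2) ^ 2 := by rw [hs]; ring
      rw [h1, hP4]
      ring) i0
    have j2 := qc_integral_prod (fun t => P4 t * Q t ^ 2) p40 p31 p22 p13 p04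
      (p01 ^ 2) (-2 * p01 * p10) (p10 ^ 2 + p01 ^ 2) (-2 * p01 * p10) (p10 ^ 2) (by
      intro t
      rw [← mul_one (P4 t * Q t ^ 2), ← Real.sin_sq_add_cos_sq t, hP4, hQdef]
      ring) i2
    have j4 := qc_integral_prod (fun t => P4 t * Q t ^ 4) p40 p31 p22 p13 p04
      (p01 ^ 4) (-4 * p01 ^ 3 * p10) (6 * p01 ^ 2 * p10 ^ 2) (-4 * p01 * p10 ^ 3) (p10 ^ 4) (by
      intro t
      rw [hP4, hQdef]
      ring) i4
    have k1 : 3 * (p40 + p04) + p22 = 0 := by linear_combination j0 / 16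
    have k2 : (p10 ^ 2 - p01 ^ 2) * (p04 - p40) = p10 * p01 * (p31 + p13) := by
      linear_combination j2 / 16 - (p10 ^ 2 + p01 ^ 2) / 2 * k1
    refine ⟨k1, k2, ?_⟩
    linear_combination j4 / 8 - 5 / 8 * (p10 ^ 2 + p01 ^ 2) ^ 2 * k1
      - 12 / 8 * (p10 ^ 2 + p01 ^ 2) * k2
  · rintro ⟨k1, k2, k3⟩
    obtain ⟨c3, hc3⟩ : ∃ c, c = p40 * (4 * p10 ^ 3 * (-p01))
      + p31 * (-3 * p10 ^ 2 * p01 ^ 2 + p10 ^ 4)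
      + p22 * (-2 * p10 * p01 ^ 3 + 2 * p10 ^ 3 * p01)
      + p13 * (-p01 ^ 4 + 3 * p01 ^ 2 * p10 ^ 2) + p04 * (4 * p01 ^ 3 * p10) := ⟨_, rfl⟩
    obtain ⟨c1, hc1⟩ : ∃ c, c = p40 * (-4 * p10 * p01 ^ 3)
      + p31 * (3 * p10 ^ 2 * p01 ^ 2 - p01 ^ 4)
      + p22 * (-2 * p10 ^ 3 * p01 + 2 * p01 ^ 3 * p10)
      + p13 * (p10 ^ 4 - 3 * p01 ^ 2 * p10 ^ 2) + p04 * (4 * p01 * p10 ^ 3) := ⟨_, rfl⟩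
    refine qc_backward P1 P4 Q (fun x => x * (c3 * (N - x ^ 2) + c1 * x ^ 2) / N ^ 4) hQ hP1c
      (by fun_prop) hper ?_
    intro t
    have hPQ : P1 t ^ 2 = N - Q t ^ 2 := by
      rw [hP1, hQdef, hN]
      linear_combination (p10 ^ 2 + p01 ^ 2) * Real.sin_sq_add_cos_sq t
    have e4 : p40 * p10 ^ 4 + p31 * p10 ^ 3 * p01 + p22 * p10 ^ 2 * p01 ^ 2
        + p13 * p10 * p01 ^ 3 + p04 * p01 ^ 4 = 0 := by
      linear_combination k3 - (p10 ^ 2 + p01 ^ 2) * k2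
    have hcos : N * Real.cos t = p10 * P1 t - p01 * Q t := by
      rw [hP1, hQdef, hN]; ring
    have hsin : N * Real.sin t = p01 * P1 t + p10 * Q t := by
      rw [hP1, hQdef, hN]; ring
    have hP4N : N ^ 4 * P4 t = p40 * (N * Real.cos t) ^ 4
        + p31 * (N * Real.cos t) ^ 3 * (N * Real.sin t)
        + p22 * (N * Real.cos t) ^ 2 * (N * Real.sin t) ^ 2
        + p13 * (N * Real.cos t) * (N * Real.sin t) ^ 3 + p04 * (N * Real.sin t) ^ 4 := by
      rw [hP4]; ring
    rw [hcos, hsin] at hP4N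
    have hfin : N ^ 4 * P4 t = P1 t * Q t * (c3 * P1 t ^ 2 + c1 * Q t ^ 2) := by
      rw [hP4N, hc3, hc1]
      linear_combination (P1 t ^ 4 - 3 * P1 t ^ 2 * Q t ^ 2) * e4
        + (Q t ^ 4 - 3 * P1 t ^ 2 * Q t ^ 2) * k3
        + (P1 t ^ 2 * Q t ^ 2 * (p10 ^ 2 + p01 ^ 2) ^ 2) * k1
    rw [← hPQ]
    field_simp
    linear_combination hfin
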